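/- Let p = 2 and 0 ≤ α ≤ β ≤ 1. Then dim_H B(α,β) = sup_{α ≤ t ≤ β} h_2(t), where h_2(t) = (−t log t − (1−t) log(1−t))/log 2 (with 0 log 0 = 0). In particular, for 0 ≤ α ≤ 1, dim_H B(α) = h_2(α), where B(α) = B(α,α). -/

import Mathlib

open Filter MeasureTheory Set
open scoped ENNReal

noncomputable section

/-- Number of words of length `n` over the alphabet `{0, …, p-1}` whose digit sum lies
strictly between `n(α-δ)` and `n(α+δ)`; this is `h(α,n,δ)`. -/
def hcount (p n : ℕ) (α δ : ℝ) : ℕ :=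
  Nat.card {w : Fin n → Fin p //
    (n : ℝ) * (α - δ) < ∑ i, ((w i : ℕ) : ℝ) ∧ (∑ i, ((w i : ℕ) : ℝ)) < n * (α + δ)}

/-- The `p`-adic entropy function
`h(α) = lim_{δ→0} limsup_{n→∞} log h(α,n,δ) / (n log p)`.
Since the inner quantity is nondecreasing in `δ`, the limit as `δ → 0⁺` equals the
infimum over `δ > 0`. -/
def entropy (p : ℕ) (α : ℝ) : ℝ :=
  ⨅ δ : {δ : ℝ // 0 < δ},
    limsup (fun n : ℕ => Real.log (hcount p n α δ) / (n * Real.log p)) atTop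

/-- Number of words of length `n` over `{0, …, p-1}` with digit sum `< n(α+δ)`;
this is `h̄(α,n,δ)`. -/
def hbarCount (p n : ℕ) (α δ : ℝ) : ℕ :=
  Nat.card {w : Fin n → Fin p // (∑ i, ((w i : ℕ) : ℝ)) < n * (α + δ)}

/-- The `p`-adic upper entropy function
`h̄(α) = lim_{δ→0} limsup_{n→∞} log h̄(α,n,δ) / (n log p)`, the limit in `δ`
being the infimum over `δ > 0` by monotonicity in `δ`. -/
def upperEntropy (p : ℕ) (α : ℝ) : ℝ :=
  ⨅ δ : {δ : ℝ // 0 < δ},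
    limsup (fun n : ℕ => Real.log (hbarCount p n α δ) / (n * Real.log p)) atTop

/-- Number of words of length `n` over `{0, …, p-1}` with digit sum `> n(α-δ)`;
this is `h̲(α,n,δ)`. -/
def hlowCount (p n : ℕ) (α δ : ℝ) : ℕ :=
  Nat.card {w : Fin n → Fin p // (n : ℝ) * (α - δ) < ∑ i, ((w i : ℕ) : ℝ)}

/-- The `p`-adic lower entropy function
`h̲(α) = lim_{δ→0} liminf_{n→∞} log h̲(α,n,δ) / (n log p)`, the limit in `δ`
being the infimum over `δ > 0` by monotonicity in `δ`. -/
def lowerEntropy (p : ℕ) (α : ℝ) : ℝ :=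
  ⨅ δ : {δ : ℝ // 0 < δ},
    liminf (fun n : ℕ => Real.log (hlowCount p n α δ) / (n * Real.log p)) atTop

/-- The `(n+1)`-th digit `x_{n+1} ∈ {0,…,p-1}` of the non-terminating `p`-adic expansion
`x = 0.x₁x₂x₃…` of `x ∈ [0,1]` (the expansion not ending in all zeros). -/
def padicDigit (p : ℕ) (x : ℝ) (n : ℕ) : ℤ :=
  (⌈x * p ^ (n + 1)⌉ - 1) - p * (⌈x * p ^ n⌉ - 1)

/-- `S_n(T^m x) = x_{m+1} + ⋯ + x_{m+n}`, the digit sum of length `n` after shifting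
`m` times. In particular `msum p x 0 n = S_n(x)`. -/
def msum (p : ℕ) (x : ℝ) (m n : ℕ) : ℤ :=
  ∑ i ∈ Finset.range n, padicDigit p x (m + i)

/-- The `n`-th lower moving digit mean `M̲ₙ(x) = liminf_{m→∞} S_n(T^m x)/n`. -/
def lowerMn (p : ℕ) (x : ℝ) (n : ℕ) : ℝ :=
  liminf (fun m : ℕ => (msum p x m n : ℝ) / n) atTop

/-- The `n`-th upper moving digit mean `M̄ₙ(x) = limsup_{m→∞} S_n(T^m x)/n`. -/
def upperMn (p : ℕ) (x : ℝ) (n : ℕ) : ℝ :=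
  limsup (fun m : ℕ => (msum p x m n : ℝ) / n) atTop

/-- The lower moving digit mean `M̲(x) = lim_{n→∞} M̲ₙ(x)`; the limit exists by
subadditivity, hence equals the `liminf`. -/
def lowerM (p : ℕ) (x : ℝ) : ℝ := liminf (fun n : ℕ => lowerMn p x n) atTop

/-- The upper moving digit mean `M̄(x) = lim_{n→∞} M̄ₙ(x)`; the limit exists by
subadditivity, hence equals the `limsup`. -/
def upperM (p : ℕ) (x : ℝ) : ℝ := limsup (fun n : ℕ => upperMn p x n) atTop

/-- The lower digit mean `A̲(x) = liminf_{n→∞} S_n(x)/n`. -/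
def lowerA (p : ℕ) (x : ℝ) : ℝ := liminf (fun n : ℕ => (msum p x 0 n : ℝ) / n) atTop

/-- The upper digit mean `Ā(x) = limsup_{n→∞} S_n(x)/n`. -/
def upperA (p : ℕ) (x : ℝ) : ℝ := limsup (fun n : ℕ => (msum p x 0 n : ℝ) / n) atTop

/-- The Banach set `B(α,β) = {x ∈ [0,1] : M̲(x) = α, M̄(x) = β}`. -/
def BanachSet (p : ℕ) (α β : ℝ) : Set ℝ :=
  {x | x ∈ Icc (0 : ℝ) 1 ∧ lowerM p x = α ∧ upperM p x = β}

/-- The explicit binary entropy function `h₂(t) = (-t log t - (1-t) log(1-t))/log 2`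
(with the convention `0 log 0 = 0`, which holds since `Real.log 0 = 0`). -/
def binEntropy (t : ℝ) : ℝ :=
  (-t * Real.log t - (1 - t) * Real.log (1 - t)) / Real.log 2

/-!
Upper bound: if `M̄(x) < t ≤ 1/2`, then eventually `S_n(x) ≤ nt`, by subadditivity. There are at
most `2 ^ (n h₂(t))` words of length `n` with at most `nt` ones, and the corresponding cylinders of
length `2 ^ (-n)` cover `x`, so the dimension is at most `h₂(t)`; now let `t` decrease to `β`. The
case `M̲(x) > t ≥ 1/2` is symmetric, and for `α ≤ 1/2 ≤ β` the claim is the bound `dim_H ≤ 1`.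

Lower bound: for `t ∈ [α, β]`, cut the digits into blocks of a large length `L`. In all but a set of
blocks of density zero, choose arbitrarily a word with about `tL` ones. The exceptional blocks form
longer and longer stretches, whose mean is alternately `α` and `β`; these stretches determine `M̲`
and `M̄`. About `2 ^ (L h₂(t))` choices are available in almost every block, so the dimension of the
resulting set is as close to `h₂(t)` as desired. The last digit of each free block is fixed to be
zero, which keeps points coming from different choices apart.
-/

open scoped Topology NNReal Finset

/-! ### Hausdorff dimension -/

section HausdorffDimension

lemma dimH_le_of_eventually_mem {X : Type*} [EMetricSpace X] {κ : ℕ → Type*} {E : Set X}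
    {s : ℝ≥0} {r : ℕ → ℝ≥0∞} {C : ℝ≥0∞} (hr : Tendsto r atTop (𝓝 0)) (code : ∀ n, X → κ n)
    (hcode : ∀ n, ∀ x ∈ E, ∀ y ∈ E, code n x = code n y → edist x y ≤ r n)
    (W : ∀ n, Finset (κ n)) (hE : ∀ x ∈ E, ∀ᶠ n in atTop, code n x ∈ W n) (hC : C ≠ ∞)
    (hW : ∀ n, #(W n) * r n ^ (s : ℝ) ≤ C) : dimH E ≤ s := by
  borelize X
  let F (N : ℕ) : Set X := {x ∈ E | ∀ n ≥ N, code n x ∈ W n}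
  let cyl (n : ℕ) (w : W n) : Set X := {x ∈ E | code n x = w}
  have hcyl n (w : W n) : Metric.ediam (cyl n w) ≤ r n :=
    Metric.ediam_le fun x hx y hy ↦ hcode n x hx.1 y hy.1 (hx.2.trans hy.2.symm)
  have hsum n : ∑ w, Metric.ediam (cyl n w) ^ (s : ℝ) ≤ C :=
    calc ∑ w, Metric.ediam (cyl n w) ^ (s : ℝ) ≤ ∑ _w : W n, r n ^ (s : ℝ) := by
          gcongr with w; exact hcyl n w
      _ = #(W n) * r n ^ (s : ℝ) := by simp
      _ ≤ C := hW n
  have hF N : dimH (F N) ≤ s := by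
    have hcover : ∀ᶠ n in atTop, F N ⊆ ⋃ w, cyl n w := by
      filter_upwards [eventually_ge_atTop N] with n hn x hx
      exact mem_iUnion.2 ⟨⟨code n x, hx.2 n hn⟩, hx.1, rfl⟩
    refine dimH_le_of_hausdorffMeasure_ne_top (ne_top_of_le_ne_top hC ?_)
    calc μH[s] (F N) ≤ liminf (fun n ↦ ∑ w, Metric.ediam (cyl n w) ^ (s : ℝ)) atTop :=
          Measure.hausdorffMeasure_le_liminf_sum _ _ r hr cyl (.of_forall hcyl) hcover
      _ ≤ liminf (fun _ ↦ C) atTop := liminf_le_liminf (.of_forall hsum)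
      _ = C := liminf_const C
  calc dimH E ≤ dimH (⋃ N, F N) := dimH_mono fun x hx ↦
        have ⟨N, hN⟩ := eventually_atTop.1 (hE x hx)
        mem_iUnion.2 ⟨N, hx, hN⟩
    _ = ⨆ N, dimH (F N) := dimH_iUnion F
    _ ≤ s := iSup_le hF

lemma mul_dimH_range_le_of_edist_le {Ω X Y : Type*} [EMetricSpace X] [EMetricSpace Y]
    {f : Ω → X} {g : Ω → Y} {C s : ℝ≥0} (hs : 0 < s)
    (h : ∀ a b, edist (g a) (g b) ≤ C * edist (f a) (f b) ^ (s : ℝ)) :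
    s * dimH (range g) ≤ dimH (range f) := by
  rcases isEmpty_or_nonempty Ω with hΩ | hΩ
  · simp [range_eq_empty]
  have hinv a : g (Function.invFun f (f a)) = g a := by
    have hfa : f (Function.invFun f (f a)) = f a := Function.invFun_eq ⟨a, rfl⟩
    simpa [hfa, hs] using h (Function.invFun f (f a)) a
  have hholder : HolderOnWith C s (g ∘ Function.invFun f) (range f) := by
    rintro _ ⟨a, rfl⟩ _ ⟨b, rfl⟩
    simpa only [Function.comp_apply, hinv] using h a b
  have himage : (g ∘ Function.invFun f) '' range f = range g := by
    rw [← range_comp]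
    exact congrArg range (funext hinv)
  rw [mul_comm, ← ENNReal.le_div_iff_mul_le (by simp [hs.ne']) (by simp), ← himage]
  exact hholder.dimH_image_le hs

lemma le_dimH_range_of_pow_firstDiff_le {X : Type*} [MetricSpace X] {D : ℕ} {s C : ℝ}
    {f : (ℕ → Fin D) → X} (hD : 1 < D) (hs : 0 < s)
    (h : ∀ x y, x ≠ y → ((D : ℝ) ^ PiNat.firstDiff x y)⁻¹ ≤ C * dist (f x) (f y) ^ s) :
    ENNReal.ofReal s ≤ dimH (range f) := by
  have hdist x y : edist (Real.ofDigits x) (Real.ofDigits y) ≤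
      C.toNNReal * edist (f x) (f y) ^ (s.toNNReal : ℝ) := by
    rcases eq_or_ne x y with rfl | hxy
    · simp
    rw [edist_dist, edist_dist, Real.coe_toNNReal _ hs.le,
      ENNReal.ofReal_rpow_of_nonneg dist_nonneg hs.le, ENNReal.ofNNReal_toNNReal,
      ← ENNReal.ofReal_mul' (by positivity)]
    refine ENNReal.ofReal_le_ofReal (le_trans ?_ (h x y hxy))
    rw [Real.dist_eq]
    exact Real.abs_ofDigits_sub_ofDigits_le fun i hi ↦ PiNat.apply_eq_of_lt_firstDiff hi
  have hrange : Icc (0 : ℝ) 1 ⊆ range (Real.ofDigits (b := D)) := by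
    simpa using (Real.ofDigits_SurjOn hD).subset_range
  have hone : dimH (range (Real.ofDigits (b := D))) = 1 := by
    rw [Real.dimH_of_nonempty_interior, Module.finrank_self, Nat.cast_one]
    exact Set.Nonempty.mono (interior_mono hrange) (by simp)
  have hdim := mul_dimH_range_le_of_edist_le (Real.toNNReal_pos.2 hs) hdist
  rwa [hone, mul_one] at hdim

end HausdorffDimension

/-! ### Digit expansions -/

section Digits

variable {p : ℕ}

lemma padicDigit_nonneg (hp : 0 < p) (x : ℝ) (n : ℕ) : 0 ≤ padicDigit p x n := by
  have hlt : p * (⌈x * p ^ n⌉ - 1) < ⌈x * p ^ (n + 1)⌉ := by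
    rw [Int.lt_ceil, pow_succ', mul_left_comm]
    push_cast
    gcongr
    linarith [Int.ceil_lt_add_one (x * (p : ℝ) ^ n)]
  rw [padicDigit]
  lia

lemma padicDigit_lt (hp : 0 < p) (x : ℝ) (n : ℕ) : padicDigit p x n < p := by
  have hle : ⌈x * p ^ (n + 1)⌉ ≤ p * ⌈x * p ^ n⌉ := by
    rw [Int.ceil_le, pow_succ', mul_left_comm]
    push_cast
    gcongr
    exact Int.le_ceil _
  rw [padicDigit]
  lia

lemma ceil_mul_pow_eq_of_padicDigit_eq {x y : ℝ} (h0 : ⌈x⌉ = ⌈y⌉) {n : ℕ}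
    (h : ∀ i < n, padicDigit p x i = padicDigit p y i) : ⌈x * p ^ n⌉ = ⌈y * p ^ n⌉ := by
  induction n with
  | zero => simpa using h0
  | succ n ih =>
    have hn := h n n.lt_succ_self
    simp only [padicDigit, ih fun i hi ↦ h i (hi.trans n.lt_succ_self)] at hn
    lia

lemma abs_sub_le_of_padicDigit_eq (hp : 0 < p) {x y : ℝ} (h0 : ⌈x⌉ = ⌈y⌉) {n : ℕ}
    (h : ∀ i < n, padicDigit p x i = padicDigit p y i) : |x - y| ≤ ((p : ℝ) ^ n)⁻¹ := by
  have hceil := ceil_mul_pow_eq_of_padicDigit_eq h0 h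
  have hlt : |x * p ^ n - y * p ^ n| < 1 := by
    rw [abs_sub_lt_iff]
    constructor <;>
      linarith [Int.le_ceil (x * (p : ℝ) ^ n), Int.ceil_lt_add_one (x * (p : ℝ) ^ n),
        Int.le_ceil (y * (p : ℝ) ^ n), Int.ceil_lt_add_one (y * (p : ℝ) ^ n),
        congrArg (Int.cast (R := ℝ)) hceil]
  rw [← sub_mul, abs_mul, abs_of_pos (by positivity : (0 : ℝ) < p ^ n)] at hlt
  rw [← one_div, le_div_iff₀ (by positivity)]
  exact hlt.le

lemma msum_eq_sub (x : ℝ) (m n : ℕ) : msum p x m n = msum p x 0 (m + n) - msum p x 0 m := by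
  simp [msum, Finset.sum_range_add]

lemma msum_div_mem_Icc (hp : 0 < p) (x : ℝ) (m n : ℕ) :
    (msum p x m n : ℝ) / n ∈ Icc (0 : ℝ) p := by
  have hnonneg : 0 ≤ msum p x m n := Finset.sum_nonneg fun i _ ↦ padicDigit_nonneg hp x _
  have hle : msum p x m n ≤ n * p := by
    simpa [msum] using Finset.sum_le_card_nsmul (Finset.range n) _ (p : ℤ)
      fun i _ ↦ (padicDigit_lt hp x (m + i)).le
  constructor
  · positivity
  · refine div_le_of_le_mul₀ n.cast_nonneg p.cast_nonneg ?_
    rw [mul_comm]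
    exact_mod_cast hle

/-- The natural number with base `b` digits `d 0, …, d (n - 1)`, most significant digit first. -/
def digitPrefix {b : ℕ} (d : ℕ → Fin b) : ℕ → ℕ
  | 0 => 0
  | n + 1 => b * digitPrefix d n + d n

lemma ofDigits_mul_pow {b : ℕ} (d : ℕ → Fin b) (n : ℕ) :
    Real.ofDigits d * b ^ n = digitPrefix d n + Real.ofDigits fun i ↦ d (i + n) := by
  have hb : (b : ℝ) ≠ 0 := by exact_mod_cast (Fin.pos (d 0)).ne'
  induction n with
  | zero => simp [digitPrefix]
  | succ n ih =>
    have htail := Real.ofDigits_eq_sum_add_ofDigits (fun i ↦ d (i + n)) 1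
    rw [pow_succ, ← mul_assoc, ih, htail]
    simp [Real.ofDigitsTerm, digitPrefix, add_assoc, add_comm 1 n]
    field_simp

lemma ofDigits_pos {b : ℕ} {d : ℕ → Fin b} {n : ℕ} (hd : (d n : ℕ) ≠ 0) :
    0 < Real.ofDigits d := by
  have hb : 0 < b := Fin.pos (d 0)
  exact Real.summable_ofDigitsTerm.tsum_pos (fun _ ↦ Real.ofDigitsTerm_nonneg) n
    (mul_pos (by positivity) (by positivity))

lemma ceil_ofDigits_mul_pow {b : ℕ} {d : ℕ → Fin b} (hd : ∃ᶠ n in atTop, (d n : ℕ) ≠ 0) (n : ℕ) :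
    ⌈Real.ofDigits d * b ^ n⌉ = digitPrefix d n + 1 := by
  obtain ⟨m, hnm, hm⟩ := frequently_atTop.1 hd n
  have hpos : 0 < Real.ofDigits fun i ↦ d (i + n) :=
    ofDigits_pos (n := m - n) (by simpa [hnm] using hm)
  rw [ofDigits_mul_pow, Int.ceil_eq_iff]
  push_cast
  exact ⟨by linarith, by linarith [Real.ofDigits_le_one fun i ↦ d (i + n)]⟩

lemma padicDigit_ofDigits {b : ℕ} {d : ℕ → Fin b} (hd : ∃ᶠ n in atTop, (d n : ℕ) ≠ 0) (n : ℕ) :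
    padicDigit b (Real.ofDigits d) n = d n := by
  simp [padicDigit, ceil_ofDigits_mul_pow hd, digitPrefix]

lemma eq_of_digitPrefix_eq {b : ℕ} {d e : ℕ → Fin b} {n N : ℕ} (hnN : n < N)
    (h : digitPrefix d N = digitPrefix e N) : d n = e n := by
  induction N with
  | zero => exact absurd hnN n.not_lt_zero
  | succ N ih =>
    have hb : 0 < b := Fin.pos (d 0)
    simp only [digitPrefix] at h
    have hlast : d N = e N := by
      simpa [Fin.ext_iff, Nat.mod_eq_of_lt] using congrArg (· % b) h
    rcases Nat.lt_succ_iff_lt_or_eq.1 hnN with hn | rfl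
    · exact ih hn (by simpa [hlast, hb.ne'] using h)
    · exact hlast

/-- The first `N + 1` digits of `d` and `e` form distinct integers which are congruent modulo `b`,
so they differ by at least `b ≥ 2`, while the tails differ by at most one. -/
lemma inv_pow_le_abs_ofDigits_sub_ofDigits {b : ℕ} {d e : ℕ → Fin b} {n N : ℕ} (hnN : n < N)
    (hne : d n ≠ e n) (heq : d N = e N) :
    ((b : ℝ) ^ (N + 1))⁻¹ ≤ |Real.ofDigits d - Real.ofDigits e| := by
  have hb : 2 ≤ b := by
    have hne' := Fin.val_ne_of_ne hne
    lia
  have hprefix : (b : ℝ) ≤ |(digitPrefix d (N + 1) : ℝ) - digitPrefix e (N + 1)| := by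
    have hpos : 1 ≤ |(digitPrefix d N : ℤ) - digitPrefix e N| :=
      Int.one_le_abs (sub_ne_zero.2 fun h ↦ hne (eq_of_digitPrefix_eq hnN (by exact_mod_cast h)))
    simp only [digitPrefix, heq, Nat.cast_add, Nat.cast_mul, add_sub_add_right_eq_sub]
    rw [← mul_sub, abs_mul, Nat.abs_cast]
    exact le_mul_of_one_le_right b.cast_nonneg (by exact_mod_cast hpos)
  have htail := abs_sub_le_of_le_of_le
    (Real.ofDigits_nonneg fun i ↦ d (i + (N + 1))) (Real.ofDigits_le_one _)
    (Real.ofDigits_nonneg fun i ↦ e (i + (N + 1))) (Real.ofDigits_le_one _)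
  rw [← one_div, div_le_iff₀ (by positivity), ← abs_of_pos (by positivity : (0 : ℝ) < b ^ (N + 1)),
    ← abs_mul, sub_mul, ofDigits_mul_pow, ofDigits_mul_pow, add_sub_add_comm]
  refine le_trans ?_ (abs_sub_abs_le_abs_add _ _)
  have hb' : (2 : ℝ) ≤ b := by exact_mod_cast hb
  linarith

end Digits

/-! ### Entropy and binomial coefficients -/

section Entropy

lemma binEntropy_eq_div (t : ℝ) : binEntropy t = Real.binEntropy t / Real.log 2 := by
  simp only [binEntropy, Real.binEntropy, Real.log_inv]
  ring

lemma continuous_binEntropy : Continuous binEntropy := by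
  simp only [funext binEntropy_eq_div]
  fun_prop

lemma binEntropy_nonneg {t : ℝ} (ht : t ∈ Icc (0 : ℝ) 1) : 0 ≤ binEntropy t := by
  rw [binEntropy_eq_div]
  exact div_nonneg (Real.binEntropy_nonneg ht.1 ht.2) (Real.log_nonneg one_le_two)

lemma binEntropy_two_inv : binEntropy 2⁻¹ = 1 := by
  rw [binEntropy_eq_div, Real.binEntropy_two_inv, div_self (Real.log_pos one_lt_two).ne']

lemma inv_two_pow_rpow_binEntropy (t : ℝ) (n : ℕ) :
    ((2 ^ n : ℝ)⁻¹) ^ binEntropy t = Real.exp (-(n * Real.binEntropy t)) := by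
  rw [Real.rpow_def_of_pos (by positivity), Real.log_inv, Real.log_pow, binEntropy_eq_div]
  have hlog : Real.log 2 ≠ 0 := (Real.log_pos one_lt_two).ne'
  congr 1
  field_simp

lemma exp_neg_mul_binEntropy_le {t : ℝ} (ht0 : 0 < t) (ht : t ≤ 2⁻¹) {k n : ℕ} (hkn : k ≤ n)
    (hk : k ≤ n * t) : Real.exp (-(n * Real.binEntropy t)) ≤ t ^ k * (1 - t) ^ (n - k) := by
  have ht1 : 0 < 1 - t := by linarith
  have hlog : Real.log t ≤ Real.log (1 - t) := Real.log_le_log ht0 (by linarith)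
  rw [← Real.exp_log (by positivity : 0 < t ^ k * (1 - t) ^ (n - k)), Real.exp_le_exp,
    Real.log_mul (by positivity) (by positivity), Real.log_pow, Real.log_pow, Nat.cast_sub hkn,
    Real.binEntropy, Real.log_inv, Real.log_inv]
  nlinarith

lemma card_filter_card_le_le_exp {ι : Type*} [Fintype ι] {t : ℝ} (ht0 : 0 < t) (ht : t ≤ 2⁻¹) :
    (#{A : Finset ι | (#A : ℝ) ≤ Fintype.card ι * t} : ℝ) ≤
      Real.exp (Fintype.card ι * Real.binEntropy t) := by
  have ht1 : 0 < 1 - t := by linarith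
  have hsum : (#{A : Finset ι | (#A : ℝ) ≤ Fintype.card ι * t} : ℝ) *
      Real.exp (-(Fintype.card ι * Real.binEntropy t)) ≤ 1 := by
    rw [← nsmul_eq_mul]
    calc _ ≤ ∑ A : Finset ι with (#A : ℝ) ≤ Fintype.card ι * t,
          t ^ #A * (1 - t) ^ (Fintype.card ι - #A) :=
        Finset.card_nsmul_le_sum _ _ _ fun A hA ↦
          exp_neg_mul_binEntropy_le ht0 ht A.card_le_univ (Finset.mem_filter.1 hA).2
      _ ≤ ∑ A : Finset ι, t ^ #A * (1 - t) ^ (Fintype.card ι - #A) :=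
        Finset.sum_le_univ_sum_of_nonneg fun A ↦ by positivity
      _ = 1 := by rw [Fintype.sum_pow_mul_eq_add_pow, add_sub_cancel, one_pow]
  rwa [Real.exp_neg, mul_inv_le_iff₀ (Real.exp_pos _), one_mul] at hsum

lemma card_filter_le_card_le_exp {ι : Type*} [Fintype ι] {t : ℝ} (ht : 2⁻¹ ≤ t) (ht1 : t < 1) :
    (#{A : Finset ι | Fintype.card ι * t ≤ (#A : ℝ)} : ℝ) ≤
      Real.exp (Fintype.card ι * Real.binEntropy t) := by
  classical
  rw [← Real.binEntropy_one_sub]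
  refine le_trans ?_ (card_filter_card_le_le_exp (ι := ι) (t := 1 - t) (by linarith) (by linarith))
  have hcompl (A : Finset ι) :
      Fintype.card ι * t ≤ (#A : ℝ) ↔ (#Aᶜ : ℝ) ≤ Fintype.card ι * (1 - t) := by
    rw [Finset.card_compl, Nat.cast_sub A.card_le_univ, mul_one_sub, sub_le_sub_iff_left]
  exact_mod_cast Finset.card_le_card_of_injOn compl
    (fun A hA ↦ by simpa [← hcompl] using hA) compl_injective.injOn

lemma factorial_mul_pow_le (j k : ℕ) : k.factorial * k ^ j ≤ j.factorial * k ^ k := by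
  rcases le_total j k with hjk | hkj
  · calc k.factorial * k ^ j = j.factorial * k.descFactorial (k - j) * k ^ j := by
          rw [← Nat.factorial_mul_descFactorial (Nat.sub_le k j), Nat.sub_sub_self hjk]
      _ ≤ j.factorial * k ^ (k - j) * k ^ j := by gcongr; exact Nat.descFactorial_le_pow _ _
      _ = j.factorial * k ^ k := by rw [mul_assoc, ← pow_add, Nat.sub_add_cancel hjk]
  · calc k.factorial * k ^ j = k.factorial * k ^ (j - k) * k ^ k := by
          rw [mul_assoc, ← pow_add, Nat.sub_add_cancel hkj]
      _ ≤ j.factorial * k ^ k := by gcongr; exact Nat.factorial_mul_pow_sub_le_factorial hkj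

lemma choose_mul_pow_mul_pow_le {i j k l : ℕ} (h : i + j = k + l) :
    (k + l).choose i * (k ^ i * l ^ j) ≤ (k + l).choose k * (k ^ k * l ^ l) := by
  have hij : (k + l).choose i * i.factorial * j.factorial = (k + l).factorial := by
    rw [← h, Nat.choose_symm_add, Nat.add_choose_mul_factorial_mul_factorial]
  refine Nat.le_of_mul_le_mul_left (c := i.factorial * j.factorial * (k.factorial * l.factorial)) ?_
    (by positivity)
  calc _ = ((k + l).choose i * i.factorial * j.factorial) *
        ((k.factorial * k ^ i) * (l.factorial * l ^ j)) := by ring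
    _ ≤ (k + l).factorial * ((i.factorial * k ^ k) * (j.factorial * l ^ l)) := by
      rw [hij]
      exact Nat.mul_le_mul_left _
        (Nat.mul_le_mul (factorial_mul_pow_le _ _) (factorial_mul_pow_le _ _))
    _ = _ := by
      rw [Nat.choose_symm_add, ← Nat.add_choose_mul_factorial_mul_factorial]
      ring

lemma add_pow_add_le_mul_choose (k l : ℕ) :
    (k + l) ^ (k + l) ≤ (k + l + 1) * ((k + l).choose k * (k ^ k * l ^ l)) := by
  rw [(Commute.all k l).add_pow', ← Finset.Nat.card_antidiagonal (k + l), ← smul_eq_mul (#_)]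
  refine Finset.sum_le_card_nsmul _ _ _ fun m hm ↦ ?_
  exact choose_mul_pow_mul_pow_le (Finset.HasAntidiagonal.mem_antidiagonal.1 hm)

lemma mul_binEntropy_div (k l : ℕ) : ((k + l : ℕ) : ℝ) * Real.binEntropy (k / (k + l : ℕ)) =
    (k + l : ℕ) * Real.log (k + l : ℕ) - k * Real.log k - l * Real.log l := by
  rcases Nat.eq_zero_or_pos (k + l) with h | h
  · obtain ⟨rfl, rfl⟩ : k = 0 ∧ l = 0 := by lia
    simp
  have hl : (1 : ℝ) - k / (k + l : ℕ) = l / (k + l : ℕ) := by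
    field_simp
    push_cast
    ring
  rw [Real.binEntropy_eq_negMulLog_add_negMulLog_one_sub, hl, div_eq_mul_inv, div_eq_mul_inv,
    Real.negMulLog_mul, Real.negMulLog_mul]
  simp only [Real.negMulLog, Real.log_inv]
  field_simp
  push_cast
  ring

lemma mul_binEntropy_div_sub_log_le_log_choose {n k : ℕ} (hkn : k ≤ n) :
    n * Real.binEntropy (k / n) - Real.log (n + 1) ≤ Real.log (n.choose k) := by
  obtain ⟨l, rfl⟩ := Nat.exists_eq_add_of_le hkn
  have hpow (m : ℕ) : ((m : ℝ) ^ m) ≠ 0 := by exact_mod_cast (Nat.pow_self_pos).ne'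
  have hchoose : ((k + l).choose k : ℝ) ≠ 0 := by exact_mod_cast (Nat.choose_pos hkn).ne'
  have hlog := Real.log_le_log (by exact_mod_cast Nat.pow_self_pos)
    (by exact_mod_cast add_pow_add_le_mul_choose k l :
      ((k + l : ℕ) : ℝ) ^ (k + l) ≤ ((k + l : ℕ) + 1) * ((k + l).choose k * (k ^ k * l ^ l)))
  rw [Real.log_mul (by positivity) (mul_ne_zero hchoose (mul_ne_zero (hpow k) (hpow l))),
    Real.log_mul hchoose (mul_ne_zero (hpow k) (hpow l)), Real.log_mul (hpow k) (hpow l),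
    Real.log_pow, Real.log_pow, Real.log_pow] at hlog
  rw [mul_binEntropy_div]
  linarith

lemma eventually_mul_lt_log_choose {ι : Type*} {l : Filter ι} {t s : ℝ} {n k : ι → ℕ} (ht : t < 1)
    (hs : s < Real.binEntropy t) (hn : Tendsto n l atTop)
    (hk : Tendsto (fun i ↦ (k i : ℝ) / n i) l (𝓝 t)) :
    ∀ᶠ i in l, s * n i < Real.log ((n i).choose (k i)) := by
  have hlog : Tendsto (fun n : ℕ ↦ Real.log (n + 1) / n) atTop (𝓝 0) := by
    simpa [Function.comp_def] using
      (Real.tendsto_pow_log_div_mul_add_atTop 1 (-1) 1 one_ne_zero).comp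
        (tendsto_natCast_atTop_atTop.comp (tendsto_add_atTop_nat 1))
  have hlim := (((Real.binEntropy_continuous.tendsto t).comp hk).sub
    (hlog.comp hn)).eventually_const_lt (by simpa using hs)
  filter_upwards [hlim, hk.eventually_lt_const ht, hn.eventually_gt_atTop 0] with i hsi hki hni
  have hni' : (0 : ℝ) < n i := by exact_mod_cast hni
  rw [div_lt_one hni', Nat.cast_lt] at hki
  refine lt_of_lt_of_le ?_ (mul_binEntropy_div_sub_log_le_log_choose hki.le)
  rw [← lt_div_iff₀ hni', sub_div, mul_div_cancel_left₀ _ hni'.ne']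
  exact hsi

lemma eventually_lt_log_choose_pred {t s : ℝ} {k : ℕ → ℕ} (ht : t < 1) (hs : s < binEntropy t)
    (hk : Tendsto (fun n ↦ (k n : ℝ) / n) atTop (𝓝 t)) :
    ∀ᶠ n : ℕ in atTop, s * (n * Real.log 2) < Real.log ((n - 1).choose (k n)) := by
  have hratio : Tendsto (fun n : ℕ ↦ (n : ℝ) / (n - 1 : ℕ)) atTop (𝓝 1) := by
    refine (tendsto_natCast_div_add_atTop (-1 : ℝ)).congr' ?_
    filter_upwards [eventually_ge_atTop 1] with n hn
    rw [Nat.cast_pred hn, sub_eq_add_neg]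
  rw [binEntropy_eq_div, lt_div_iff₀ (Real.log_pos one_lt_two)] at hs
  obtain ⟨r, hsr, hrt⟩ := exists_between hs
  have hk' : Tendsto (fun n ↦ (k n : ℝ) / (n - 1 : ℕ)) atTop (𝓝 t) := by
    rw [← mul_one t]
    refine (hk.mul hratio).congr' ?_
    filter_upwards [eventually_ge_atTop 1] with n hn
    exact div_mul_div_cancel₀ (by positivity)
  filter_upwards [eventually_mul_lt_log_choose ht hrt (tendsto_sub_atTop_nat 1) hk',
    (hratio.const_mul (s * Real.log 2)).eventually_lt_const (by simpa using hsr),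
    eventually_gt_atTop 1] with n hchoose hlt hn
  rw [← mul_div_assoc, div_lt_iff₀ (by simpa using hn)] at hlt
  linarith

lemma exists_lt_log_forall_le_choose {t s : ℝ} (ht : t ∈ Ioo (0 : ℝ) 1) (hs : s < binEntropy t) :
    ∃ L D : ℕ, s * (L * Real.log 2) < Real.log D ∧
      ∀ c ∈ Icc ⌊t * L⌋₊ ⌈t * L⌉₊, D ≤ (L - 1).choose c := by
  have hfloor := (tendsto_nat_floor_mul_div_atTop ht.1.le).comp
    (tendsto_natCast_atTop_atTop (R := ℝ))
  have hceil := (tendsto_nat_ceil_mul_div_atTop ht.1.le).comp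
    (tendsto_natCast_atTop_atTop (R := ℝ))
  obtain ⟨L, hL, hL'⟩ := ((eventually_lt_log_choose_pred ht.2 hs hfloor).and
    (eventually_lt_log_choose_pred ht.2 hs hceil)).exists
  refine ⟨L, min ((L - 1).choose ⌊t * L⌋₊) ((L - 1).choose ⌈t * L⌉₊), ?_, fun c hc ↦ ?_⟩
  · rcases min_choice ((L - 1).choose ⌊t * L⌋₊) ((L - 1).choose ⌈t * L⌉₊) with h | h <;>
      rwa [h]
  · have hle := Nat.ceil_le_floor_add_one (t * L)
    obtain rfl | rfl : c = ⌊t * L⌋₊ ∨ c = ⌈t * L⌉₊ := by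
      obtain ⟨hfloor_le, hle_ceil⟩ := hc
      lia
    · exact min_le_left _ _
    · exact min_le_right _ _

end Entropy

/-! ### Moving digit means -/

section MovingMeans

lemma isBoundedUnder_le_of_mem_Icc {u : ℕ → ℝ} {a b : ℝ} (h : ∀ n, u n ∈ Icc a b) :
    IsBoundedUnder (· ≤ ·) atTop u := isBoundedUnder_of ⟨b, fun n ↦ (h n).2⟩

lemma isBoundedUnder_ge_of_mem_Icc {u : ℕ → ℝ} {a b : ℝ} (h : ∀ n, u n ∈ Icc a b) :
    IsBoundedUnder (· ≥ ·) atTop u := isBoundedUnder_of ⟨a, fun n ↦ (h n).1⟩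

lemma limsup_mem_Icc {u : ℕ → ℝ} {a b : ℝ} (h : ∀ n, u n ∈ Icc a b) :
    limsup u atTop ∈ Icc a b :=
  ⟨le_limsup_of_frequently_le (.of_forall fun n ↦ (h n).1) (isBoundedUnder_le_of_mem_Icc h),
    limsup_le_of_le (isBoundedUnder_ge_of_mem_Icc h).isCoboundedUnder_le
      (.of_forall fun n ↦ (h n).2)⟩

lemma liminf_mem_Icc {u : ℕ → ℝ} {a b : ℝ} (h : ∀ n, u n ∈ Icc a b) :
    liminf u atTop ∈ Icc a b :=
  ⟨le_liminf_of_le (isBoundedUnder_le_of_mem_Icc h).isCoboundedUnder_ge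
      (.of_forall fun n ↦ (h n).1),
    liminf_le_of_frequently_le (.of_forall fun n ↦ (h n).2) (isBoundedUnder_ge_of_mem_Icc h)⟩

variable {p : ℕ}

lemma upperMn_mem_Icc (hp : 0 < p) (x : ℝ) (n : ℕ) : upperMn p x n ∈ Icc (0 : ℝ) p :=
  limsup_mem_Icc fun m ↦ msum_div_mem_Icc hp x m n

lemma lowerMn_mem_Icc (hp : 0 < p) (x : ℝ) (n : ℕ) : lowerMn p x n ∈ Icc (0 : ℝ) p :=
  liminf_mem_Icc fun m ↦ msum_div_mem_Icc hp x m n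

lemma exists_forall_le_of_eventually_add_le {u : ℕ → ℝ} {n : ℕ} (hn : 0 < n)
    (h : ∀ᶠ m in atTop, u (m + n) ≤ u m) : ∃ C, ∀ N, u N ≤ C := by
  obtain ⟨m₀, hm₀⟩ := eventually_atTop.1 h
  obtain ⟨C, hC⟩ := ((Finset.range (m₀ + n)).image u).exists_le
  refine ⟨C, fun N ↦ ?_⟩
  induction N using Nat.strong_induction_on with
  | _ N ih =>
    by_cases hN : N < m₀ + n
    · exact hC _ (Finset.mem_image_of_mem _ (Finset.mem_range.2 hN))
    · have hstep := hm₀ (N - n) (by lia)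
      rw [Nat.sub_add_cancel (by lia)] at hstep
      exact hstep.trans (ih (N - n) (by lia))

lemma eventually_le_mul_of_eventually_sub_le {S : ℕ → ℝ} {s t : ℝ} {n : ℕ} (hst : s < t)
    (hn : 0 < n) (h : ∀ᶠ m in atTop, S (m + n) - S m ≤ n * s) :
    ∀ᶠ N : ℕ in atTop, S N ≤ N * t := by
  obtain ⟨C, hC⟩ := exists_forall_le_of_eventually_add_le (u := fun m ↦ S m - m * s) hn <| by
    filter_upwards [h] with m hm
    push_cast
    linarith
  filter_upwards [(tendsto_natCast_atTop_atTop.atTop_mul_const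
    (sub_pos.2 hst)).eventually_ge_atTop C] with N hN
  linarith [hC N]

lemma eventually_msum_le_of_upperM_lt (hp : 0 < p) {x t : ℝ} (h : upperM p x < t) :
    ∀ᶠ n : ℕ in atTop, (msum p x 0 n : ℝ) ≤ n * t := by
  obtain ⟨s, hs, hst⟩ := exists_between h
  obtain ⟨n, hns, hn⟩ := ((eventually_lt_of_limsup_lt hs
    (isBoundedUnder_le_of_mem_Icc (upperMn_mem_Icc hp x))).and (eventually_gt_atTop 0)).exists
  refine eventually_le_mul_of_eventually_sub_le (n := n) hst hn ?_
  filter_upwards [eventually_lt_of_limsup_lt hns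
    (isBoundedUnder_le_of_mem_Icc fun m ↦ msum_div_mem_Icc hp x m n)] with m hm
  rw [div_lt_iff₀' (by exact_mod_cast hn), msum_eq_sub, Int.cast_sub] at hm
  exact hm.le

lemma eventually_le_msum_of_lt_lowerM (hp : 0 < p) {x t : ℝ} (h : t < lowerM p x) :
    ∀ᶠ n : ℕ in atTop, n * t ≤ (msum p x 0 n : ℝ) := by
  obtain ⟨s, hts, hs⟩ := exists_between h
  obtain ⟨n, hns, hn⟩ := ((eventually_lt_of_lt_liminf hs
    (isBoundedUnder_ge_of_mem_Icc (lowerMn_mem_Icc hp x))).and (eventually_gt_atTop 0)).exists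
  have hneg : ∀ᶠ N : ℕ in atTop, -(msum p x 0 N : ℝ) ≤ N * -t := by
    refine eventually_le_mul_of_eventually_sub_le (n := n) (neg_lt_neg hts) hn ?_
    filter_upwards [eventually_lt_of_lt_liminf hns
      (isBoundedUnder_ge_of_mem_Icc fun m ↦ msum_div_mem_Icc hp x m n)] with m hm
    rw [lt_div_iff₀' (by exact_mod_cast hn), msum_eq_sub, Int.cast_sub] at hm
    linarith
  filter_upwards [hneg] with N hN
  linarith

end MovingMeans

/-! ### The upper bound -/

section UpperBound

/-- The positions of the ones among the first `n` binary digits of `x`. -/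
def onePositions (n : ℕ) (x : ℝ) : Finset (Fin n) := {i | padicDigit 2 x i = 1}

lemma padicDigit_two_eq_zero_or_one (x : ℝ) (n : ℕ) :
    padicDigit 2 x n = 0 ∨ padicDigit 2 x n = 1 := by
  have hnonneg := padicDigit_nonneg two_pos x n
  have hlt := padicDigit_lt two_pos x n
  lia

lemma card_onePositions (x : ℝ) (n : ℕ) : (#(onePositions n x) : ℤ) = msum 2 x 0 n := by
  rw [onePositions, msum, Finset.natCast_card_filter, Finset.sum_range]
  refine Finset.sum_congr rfl fun i _ ↦ ?_
  rcases padicDigit_two_eq_zero_or_one x i with h | h <;> simp [h]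

lemma padicDigit_eq_of_onePositions_eq {x y : ℝ} {n : ℕ}
    (h : onePositions n x = onePositions n y) {i : ℕ} (hi : i < n) :
    padicDigit 2 x i = padicDigit 2 y i := by
  have hiff : padicDigit 2 x i = 1 ↔ padicDigit 2 y i = 1 := by
    simpa [onePositions] using Finset.ext_iff.1 h ⟨i, hi⟩
  rcases padicDigit_two_eq_zero_or_one x i with hx | hx <;>
    rcases padicDigit_two_eq_zero_or_one y i with hy | hy <;> simp_all

lemma dimH_le_of_eventually_onePositions_mem {E : Set ℝ} {t : ℝ} (ht : t ∈ Icc (0 : ℝ) 1)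
    (hE01 : E ⊆ Icc 0 1) (W : ∀ n, Finset (Finset (Fin n)))
    (hE : ∀ x ∈ E, ∀ᶠ n in atTop, onePositions n x ∈ W n)
    (hW : ∀ n, (#(W n) : ℝ) ≤ Real.exp (n * Real.binEntropy t)) :
    dimH E ≤ ENNReal.ofReal (binEntropy t) := by
  have hpow : Tendsto (fun n : ℕ ↦ ENNReal.ofReal (((2 : ℕ) ^ n : ℝ)⁻¹)) atTop (𝓝 0) := by
    simpa using ENNReal.tendsto_ofReal
      (tendsto_inv_atTop_zero.comp (tendsto_pow_atTop_atTop_of_one_lt (one_lt_two (α := ℝ))))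
  refine dimH_le_of_eventually_mem (C := 2) hpow (fun n x ↦ (⌈x⌉, onePositions n x)) ?_
    (fun n ↦ {0, 1} ×ˢ W n) ?_ ENNReal.ofNat_ne_top ?_
  · rintro n x - y - hxy
    rw [edist_dist, Real.dist_eq]
    obtain ⟨hceil, hones⟩ := Prod.mk.inj hxy
    exact ENNReal.ofReal_le_ofReal (abs_sub_le_of_padicDigit_eq two_pos hceil
      fun i hi ↦ padicDigit_eq_of_onePositions_eq hones hi)
  · intro x hx
    filter_upwards [hE x hx] with n hn
    have hceil : ⌈x⌉ = 0 ∨ ⌈x⌉ = 1 := by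
      have hnonneg : 0 ≤ ⌈x⌉ := Int.ceil_nonneg (hE01 hx).1
      have hle : ⌈x⌉ ≤ 1 := Int.ceil_le.2 (by simpa using (hE01 hx).2)
      lia
    simpa [hn] using hceil
  · intro n
    have hreal : (2 * #(W n) : ℝ) * ((2 ^ n : ℝ)⁻¹) ^ binEntropy t ≤ 2 := by
      rw [inv_two_pow_rpow_binEntropy, Real.exp_neg, mul_inv_le_iff₀ (Real.exp_pos _)]
      gcongr
      exact hW n
    rw [Real.coe_toNNReal _ (binEntropy_nonneg ht),
      ENNReal.ofReal_rpow_of_nonneg (by positivity) (binEntropy_nonneg ht),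
      ← ENNReal.ofReal_natCast, ← ENNReal.ofReal_mul (by positivity), ← ENNReal.ofReal_ofNat]
    exact ENNReal.ofReal_le_ofReal (by simpa using hreal)

lemma dimH_le_binEntropy_of_eventually_msum_le {E : Set ℝ} {t : ℝ} (ht0 : 0 < t) (ht : t ≤ 2⁻¹)
    (hE01 : E ⊆ Icc 0 1) (hE : ∀ x ∈ E, ∀ᶠ n : ℕ in atTop, (msum 2 x 0 n : ℝ) ≤ n * t) :
    dimH E ≤ ENNReal.ofReal (binEntropy t) := by
  refine dimH_le_of_eventually_onePositions_mem ⟨ht0.le, by linarith⟩ hE01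
    (fun n ↦ {A | (#A : ℝ) ≤ n * t}) (fun x hx ↦ ?_) fun n ↦ ?_
  · filter_upwards [hE x hx] with n hn
    rw [← card_onePositions] at hn
    simpa using hn
  · simpa using card_filter_card_le_le_exp (ι := Fin n) ht0 ht

lemma dimH_le_binEntropy_of_eventually_le_msum {E : Set ℝ} {t : ℝ} (ht : 2⁻¹ ≤ t) (ht1 : t < 1)
    (hE01 : E ⊆ Icc 0 1) (hE : ∀ x ∈ E, ∀ᶠ n : ℕ in atTop, n * t ≤ (msum 2 x 0 n : ℝ)) :
    dimH E ≤ ENNReal.ofReal (binEntropy t) := by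
  refine dimH_le_of_eventually_onePositions_mem ⟨by linarith, ht1.le⟩ hE01
    (fun n ↦ {A | n * t ≤ (#A : ℝ)}) (fun x hx ↦ ?_) fun n ↦ ?_
  · filter_upwards [hE x hx] with n hn
    rw [← card_onePositions] at hn
    simpa using hn
  · simpa using card_filter_le_card_le_exp (ι := Fin n) ht ht1

lemma tendsto_ofReal_binEntropy (t : ℝ) {l : Filter ℝ} (hl : l ≤ 𝓝 t) :
    Tendsto (fun u ↦ ENNReal.ofReal (binEntropy u)) l (𝓝 (ENNReal.ofReal (binEntropy t))) :=
  ((ENNReal.continuous_ofReal.comp continuous_binEntropy).tendsto t).mono_left hl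

lemma exists_dimH_BanachSet_le {α β : ℝ} (hα : 0 ≤ α) (hαβ : α ≤ β) (hβ : β ≤ 1) :
    ∃ t ∈ Icc α β, dimH (BanachSet 2 α β) ≤ ENNReal.ofReal (binEntropy t) := by
  have hsub : BanachSet 2 α β ⊆ Icc 0 1 := fun x hx ↦ hx.1
  rcases lt_or_ge β 2⁻¹ with hβ2 | hβ2
  · refine ⟨β, right_mem_Icc.2 hαβ,
      ge_of_tendsto (tendsto_ofReal_binEntropy β (l := 𝓝[>] β) nhdsWithin_le_nhds) ?_⟩
    filter_upwards [Ioo_mem_nhdsGT hβ2] with t ht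
    exact dimH_le_binEntropy_of_eventually_msum_le (by linarith [ht.1]) ht.2.le hsub
      fun x hx ↦ eventually_msum_le_of_upperM_lt two_pos (hx.2.2.trans_lt ht.1)
  rcases lt_or_ge 2⁻¹ α with hα2 | hα2
  · refine ⟨α, left_mem_Icc.2 hαβ,
      ge_of_tendsto (tendsto_ofReal_binEntropy α (l := 𝓝[<] α) nhdsWithin_le_nhds) ?_⟩
    filter_upwards [Ioo_mem_nhdsLT hα2] with t ht
    exact dimH_le_binEntropy_of_eventually_le_msum ht.1.le (by linarith [ht.2]) hsub
      fun x hx ↦ eventually_le_msum_of_lt_lowerM two_pos (ht.2.trans_eq hx.2.1.symm)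
  · refine ⟨2⁻¹, ⟨hα2, hβ2⟩, ?_⟩
    rw [binEntropy_two_inv, ENNReal.ofReal_one]
    exact (dimH_mono (subset_univ _)).trans Real.dimH_univ.le

end UpperBound

/-! ### Digit sums following a prescribed mean -/

section PrescribedMeans

lemma abs_liminf_sub_le {u v : ℕ → ℝ} {a ε : ℝ} (hu : IsBoundedUnder (· ≤ ·) atTop u)
    (huv : ∀ m, |u m - v m| ≤ ε) (hv : ∀ m, a ≤ v m) (ha : ∃ᶠ m in atTop, v m = a) :
    |liminf u atTop - a| ≤ ε := by
  have hge : ∀ m, a - ε ≤ u m := fun m ↦ by linarith [(abs_le.1 (huv m)).1, hv m]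
  have hle : ∃ᶠ m in atTop, u m ≤ a + ε :=
    ha.mono fun m hm ↦ by linarith [(abs_le.1 (huv m)).2]
  rw [abs_sub_le_iff, sub_le_iff_le_add', sub_le_comm]
  exact ⟨liminf_le_of_frequently_le hle (isBoundedUnder_of ⟨_, hge⟩),
    le_liminf_of_le hu.isCoboundedUnder_ge (.of_forall hge)⟩

lemma abs_limsup_sub_le {u v : ℕ → ℝ} {a ε : ℝ} (hu : IsBoundedUnder (· ≥ ·) atTop u)
    (huv : ∀ m, |u m - v m| ≤ ε) (hv : ∀ m, v m ≤ a) (ha : ∃ᶠ m in atTop, v m = a) :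
    |limsup u atTop - a| ≤ ε := by
  have hle : ∀ m, u m ≤ a + ε := fun m ↦ by linarith [(abs_le.1 (huv m)).2, hv m]
  have hge : ∃ᶠ m in atTop, a - ε ≤ u m :=
    ha.mono fun m hm ↦ by linarith [(abs_le.1 (huv m)).1]
  rw [abs_sub_le_iff, sub_le_iff_le_add', sub_le_comm]
  exact ⟨limsup_le_of_le hu.isCoboundedUnder_le (.of_forall hle),
    le_limsup_of_frequently_le hge (isBoundedUnder_of ⟨_, hle⟩)⟩

lemma tendsto_of_abs_sub_le_div {u : ℕ → ℝ} {a C : ℝ} (h : ∀ n > 0, |u n - a| ≤ C / n) :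
    Tendsto u atTop (𝓝 a) :=
  tendsto_iff_norm_sub_tendsto_zero.2 <| squeeze_zero' (.of_forall fun _ ↦ norm_nonneg _)
    ((eventually_gt_atTop 0).mono h) (tendsto_const_div_atTop_nhds_zero_nat C)

variable {p : ℕ} {x α β C : ℝ} {g : ℕ → ℝ}

lemma abs_msum_div_sub_le (h : ∀ n, |msum p x 0 n - ∑ i ∈ Finset.range n, g i| ≤ C) (m n : ℕ) :
    |msum p x m n / n - (∑ i ∈ Finset.range n, g (m + i)) / n| ≤ (C + C) / n := by
  have hsplit : msum p x m n - ∑ i ∈ Finset.range n, g (m + i) =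
      (msum p x 0 (m + n) - ∑ i ∈ Finset.range (m + n), g i) -
        (msum p x 0 m - ∑ i ∈ Finset.range m, g i) := by
    rw [msum_eq_sub, Finset.sum_range_add]
    push_cast
    ring
  rw [← sub_div, abs_div, Nat.abs_cast, hsplit]
  gcongr
  exact (abs_sub _ _).trans (add_le_add (h _) (h _))

lemma sum_div_eq_of_forall_eq {a : ℝ} {m n : ℕ} (hn : 0 < n) (h : ∀ i < n, g (m + i) = a) :
    (∑ i ∈ Finset.range n, g (m + i)) / n = a := by
  rw [Finset.sum_congr rfl fun i hi ↦ h i (Finset.mem_range.1 hi), Finset.sum_const,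
    Finset.card_range, nsmul_eq_mul, mul_div_cancel_left₀ _ (by positivity)]

lemma lowerM_eq_of_abs_msum_sub_le (hp : 0 < p) (hg : ∀ n, α ≤ g n)
    (h : ∀ n, |msum p x 0 n - ∑ i ∈ Finset.range n, g i| ≤ C)
    (hα : ∀ n, ∃ᶠ m in atTop, ∀ i < n, g (m + i) = α) : lowerM p x = α := by
  refine (tendsto_of_abs_sub_le_div (C := C + C) fun n hn ↦ ?_).liminf_eq
  refine abs_liminf_sub_le (isBoundedUnder_le_of_mem_Icc fun m ↦ msum_div_mem_Icc hp x m n)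
    (abs_msum_div_sub_le h · n) (fun m ↦ ?_) ((hα n).mono fun m ↦ sum_div_eq_of_forall_eq hn)
  rw [le_div_iff₀' (by positivity)]
  simpa using Finset.card_nsmul_le_sum (Finset.range n) _ α fun i _ ↦ hg (m + i)

lemma upperM_eq_of_abs_msum_sub_le (hp : 0 < p) (hg : ∀ n, g n ≤ β)
    (h : ∀ n, |msum p x 0 n - ∑ i ∈ Finset.range n, g i| ≤ C)
    (hβ : ∀ n, ∃ᶠ m in atTop, ∀ i < n, g (m + i) = β) : upperM p x = β := by
  refine (tendsto_of_abs_sub_le_div (C := C + C) fun n hn ↦ ?_).limsup_eq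
  refine abs_limsup_sub_le (isBoundedUnder_ge_of_mem_Icc fun m ↦ msum_div_mem_Icc hp x m n)
    (abs_msum_div_sub_le h · n) (fun m ↦ ?_) ((hβ n).mono fun m ↦ sum_div_eq_of_forall_eq hn)
  rw [div_le_iff₀' (by positivity)]
  simpa using Finset.sum_le_card_nsmul (Finset.range n) _ β fun i _ ↦ hg (m + i)

end PrescribedMeans

/-! ### Free blocks -/

section FreeBlocks

/-- The blocks whose digits may be chosen freely up to their number of ones: all but the first `j`
blocks of each dyadic range `[2 ^ j, 2 ^ (j + 1))`. The exceptional blocks form arbitrarily long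
stretches but have density zero. -/
abbrev IsFreeBlock (i : ℕ) : Prop := 2 ^ Nat.log 2 i + Nat.log 2 i ≤ i

/-- The digit mean prescribed on the `i`-th block: `t` on the free blocks, and alternately `α` and
`β` on the stretches of blocks between them. -/
def blockMean (α β t : ℝ) (i : ℕ) : ℝ :=
  if IsFreeBlock i then t else if Even (Nat.log 2 i) then α else β

lemma blockMean_mem_Icc {α β t : ℝ} (ht : t ∈ Icc α β) (i : ℕ) : blockMean α β t i ∈ Icc α β := by
  have hαβ := ht.1.trans ht.2
  rw [blockMean]
  split_ifs
  exacts [ht, left_mem_Icc.2 hαβ, right_mem_Icc.2 hαβ]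

lemma log_two_pow_add {j r : ℕ} (h : r ≤ j) : Nat.log 2 (2 ^ j + r) = j := by
  have hj : j < 2 ^ j := Nat.lt_two_pow_self
  exact Nat.log_eq_of_pow_le_of_lt_pow (by lia) (by lia)

lemma infinite_setOf_isFreeBlock : {i | IsFreeBlock i}.Infinite :=
  Nat.frequently_atTop_iff_infinite.1 <| frequently_atTop.2 fun n ↦
    ⟨2 ^ n + n, Nat.le_add_left _ _, by rw [IsFreeBlock, log_two_pow_add le_rfl]⟩

lemma blockMean_two_pow_add_div (α β t : ℝ) {L j i : ℕ} (hL : 0 < L) (h : i < j) :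
    blockMean α β t ((L * 2 ^ j + i) / L) = if Even j then α else β := by
  have hi : i / L < j := (Nat.div_le_self i L).trans_lt h
  have hlog := log_two_pow_add hi.le
  have hfree : ¬ IsFreeBlock (2 ^ j + i / L) := by rw [IsFreeBlock, hlog]; lia
  rw [Nat.mul_add_div hL, blockMean, if_neg hfree, hlog]

lemma le_mul_two_pow {L M j : ℕ} (hL : 0 < L) (hM : M ≤ j) : M ≤ L * 2 ^ j :=
  (hM.trans Nat.lt_two_pow_self.le).trans (Nat.le_mul_of_pos_left _ hL)

lemma frequently_blockMean_eq_left (α β t : ℝ) {L : ℕ} (hL : 0 < L) (n : ℕ) :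
    ∃ᶠ m in atTop, ∀ i < n, blockMean α β t ((m + i) / L) = α :=
  frequently_atTop.2 fun M ↦ ⟨L * 2 ^ (2 * (n + M)), le_mul_two_pow hL (by lia), fun i hi ↦ by
    rw [blockMean_two_pow_add_div α β t hL (by lia), if_pos (even_two_mul _)]⟩

lemma frequently_blockMean_eq_right (α β t : ℝ) {L : ℕ} (hL : 0 < L) (n : ℕ) :
    ∃ᶠ m in atTop, ∀ i < n, blockMean α β t ((m + i) / L) = β :=
  frequently_atTop.2 fun M ↦ ⟨L * 2 ^ (2 * (n + M) + 1), le_mul_two_pow hL (by lia),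
    fun i hi ↦ by rw [blockMean_two_pow_add_div α β t hL (by lia),
      if_neg (Nat.not_even_two_mul_add_one _)]⟩

lemma le_count_isFreeBlock_add_log_sq (n : ℕ) :
    n ≤ Nat.count IsFreeBlock n + (Nat.log 2 n + 1) ^ 2 := by
  have hsum := Finset.card_filter_add_card_filter_not (s := Finset.range n) IsFreeBlock
  rw [← Nat.count_eq_card_filter_range, Finset.card_range] at hsum
  have hpow : ∀ i, 2 ^ Nat.log 2 i ≤ i + 1 := fun i ↦ by
    rcases eq_or_ne i 0 with rfl | hi
    · simp
    · exact (Nat.pow_log_le_self 2 hi).trans i.le_succ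
  have hcard : #{i ∈ Finset.range n | ¬ IsFreeBlock i} ≤
      #(Finset.range (Nat.log 2 n + 1) ×ˢ Finset.range (Nat.log 2 n + 1)) := by
    refine Finset.card_le_card_of_injOn (fun i ↦ (Nat.log 2 i, i + 1 - 2 ^ Nat.log 2 i))
      (fun i hi ↦ ?_) fun i _ j _ hij ↦ ?_
    · rw [Finset.mem_coe, Finset.mem_filter, Finset.mem_range] at hi
      have hlog : Nat.log 2 i ≤ Nat.log 2 n := Nat.log_mono_right hi.1.le
      rw [Finset.mem_coe, Finset.mem_product, Finset.mem_range, Finset.mem_range]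
      lia
    · obtain ⟨hlog, hsub⟩ := Prod.mk.inj hij
      have hi := hpow i
      rw [hlog] at hi hsub
      have hj := hpow j
      lia
  rw [Finset.card_product, Finset.card_range, ← sq] at hcard
  lia

lemma tendsto_log_two_atTop : Tendsto (Nat.log 2) atTop atTop :=
  tendsto_atTop.2 fun b ↦ (eventually_ge_atTop (2 ^ b)).mono fun _ h ↦
    Nat.le_log_of_pow_le one_lt_two h

lemma eventually_log_sq_le {c : ℝ} (hc : 0 < c) :
    ∀ᶠ n : ℕ in atTop, ((Nat.log 2 n + 1 : ℕ) : ℝ) ^ 2 ≤ c * n := by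
  have hpow : ∀ᶠ j : ℕ in atTop, ((j + 1 : ℕ) : ℝ) ^ 2 ≤ c / 2 * 2 ^ (j + 1) := by
    simpa using (tendsto_add_atTop_nat 1).eventually
      ((isLittleO_pow_const_const_pow_of_one_lt (R := ℝ) 2 one_lt_two).def (half_pos hc))
  filter_upwards [tendsto_log_two_atTop.eventually hpow, eventually_ne_atTop 0] with n hn h0
  have hle : (2 : ℝ) ^ Nat.log 2 n ≤ n := by exact_mod_cast Nat.pow_log_le_self 2 h0
  calc _ ≤ c / 2 * 2 ^ (Nat.log 2 n + 1) := hn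
    _ = c * 2 ^ Nat.log 2 n := by ring
    _ ≤ c * n := by gcongr

lemma exists_forall_mul_le_count_isFreeBlock_add {ρ : ℝ} (hρ : ρ < 1) :
    ∃ C, ∀ n : ℕ, ρ * n ≤ Nat.count IsFreeBlock n + C := by
  have hbdd : IsBoundedUnder (· ≤ ·) atTop fun n : ℕ ↦ ρ * n - Nat.count IsFreeBlock n := by
    refine isBoundedUnder_of_eventually_le (a := 0) ?_
    filter_upwards [eventually_log_sq_le (sub_pos.2 hρ)] with n hn
    have hcount : (n : ℝ) ≤ Nat.count IsFreeBlock n + ((Nat.log 2 n + 1 : ℕ) : ℝ) ^ 2 := by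
      exact_mod_cast le_count_isFreeBlock_add_log_sq n
    linarith
  obtain ⟨C, hC⟩ := hbdd.bddAbove_range
  exact ⟨C, fun n ↦ by linarith [hC (mem_range_self n)]⟩

end FreeBlocks

/-! ### Block sequences -/

section Blocks

/-- The increments of the rounded partial sums of `u`: an integer sequence whose partial sums stay
within distance one of those of `u`. -/
def floorIncrement (u : ℕ → ℝ) (i : ℕ) : ℕ :=
  ⌊∑ j ∈ Finset.range (i + 1), u j⌋₊ - ⌊∑ j ∈ Finset.range i, u j⌋₊

lemma sum_floorIncrement {u : ℕ → ℝ} (hu : ∀ i, 0 ≤ u i) (n : ℕ) :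
    ∑ i ∈ Finset.range n, floorIncrement u i = ⌊∑ i ∈ Finset.range n, u i⌋₊ := by
  have hmono : Monotone fun n ↦ ⌊∑ i ∈ Finset.range n, u i⌋₊ :=
    monotone_nat_of_le_succ fun n ↦ Nat.floor_mono <| by
      rw [Finset.sum_range_succ]
      exact le_add_of_nonneg_right (hu n)
  simpa [floorIncrement] using Finset.sum_range_tsub hmono n

lemma floorIncrement_mem_Icc {u : ℕ → ℝ} (hu : ∀ i, 0 ≤ u i) (i : ℕ) :
    floorIncrement u i ∈ Icc ⌊u i⌋₊ ⌈u i⌉₊ := by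
  have hsum : 0 ≤ ∑ j ∈ Finset.range i, u j := Finset.sum_nonneg fun j _ ↦ hu j
  rw [floorIncrement, Finset.sum_range_succ]
  constructor
  · refine le_tsub_of_add_le_left (Nat.le_floor ?_)
    push_cast
    exact add_le_add (Nat.floor_le hsum) (Nat.floor_le (hu i))
  · rw [tsub_le_iff_left, ← Nat.floor_add_natCast hsum]
    exact Nat.floor_mono (by linarith [Nat.le_ceil (u i)])

lemma abs_sum_floorIncrement_sub_le {u : ℕ → ℝ} (hu : ∀ i, 0 ≤ u i) (n : ℕ) :
    |∑ i ∈ Finset.range n, ((floorIncrement u i : ℝ) - u i)| ≤ 1 := by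
  have hsum : 0 ≤ ∑ i ∈ Finset.range n, u i := Finset.sum_nonneg fun i _ ↦ hu i
  rw [Finset.sum_sub_distrib, ← Nat.cast_sum, sum_floorIncrement hu, abs_sub_le_iff]
  constructor <;>
    linarith [Nat.floor_le hsum, Nat.lt_floor_add_one (∑ i ∈ Finset.range n, u i)]

lemma sum_range_mul {M : Type*} [AddCommMonoid M] (w : ℕ → M) (L i : ℕ) :
    ∑ n ∈ Finset.range (L * i), w n =
      ∑ j ∈ Finset.range i, ∑ r ∈ Finset.range L, w (L * j + r) := by
  induction i with
  | zero => simp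
  | succ i ih => rw [mul_add_one, Finset.sum_range_add, ih, Finset.sum_range_succ]

lemma abs_sum_range_le_add {w : ℕ → ℝ} {K : ℝ} {L : ℕ} (hL : 0 < L) (hw : ∀ n, |w n| ≤ 1)
    (hK : ∀ i, |∑ n ∈ Finset.range (L * i), w n| ≤ K) (N : ℕ) :
    |∑ n ∈ Finset.range N, w n| ≤ K + L := by
  have hrest : |∑ r ∈ Finset.range (N % L), w (L * (N / L) + r)| ≤ L :=
    calc |∑ r ∈ Finset.range (N % L), w (L * (N / L) + r)|
        ≤ ∑ r ∈ Finset.range (N % L), |w (L * (N / L) + r)| := Finset.abs_sum_le_sum_abs _ _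
      _ ≤ (N % L : ℕ) := by
        simpa using Finset.sum_le_card_nsmul (Finset.range (N % L)) _ 1 fun r _ ↦ hw _
      _ ≤ L := by exact_mod_cast (Nat.mod_lt N hL).le
  conv_lhs => rw [← Nat.div_add_mod N L, Finset.sum_range_add]
  exact (abs_add_le _ _).trans (add_le_add (hK _) hrest)

/-- The binary sequence whose `i`-th block of length `L` has ones exactly at the places in `A i`. -/
def blockDigits (L : ℕ) (A : ℕ → Finset ℕ) (n : ℕ) : Fin 2 :=
  if n % L ∈ A (n / L) then 1 else 0

lemma blockDigits_mul_add {L : ℕ} (A : ℕ → Finset ℕ) (i : ℕ) {r : ℕ} (hr : r < L) :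
    blockDigits L A (L * i + r) = if r ∈ A i then 1 else 0 := by
  rw [blockDigits, Nat.mul_add_mod, Nat.mod_eq_of_lt hr, Nat.mul_add_div (by lia),
    Nat.div_eq_of_lt hr, add_zero]

lemma sum_blockDigits {L : ℕ} {A : ℕ → Finset ℕ} {i : ℕ} (hA : A i ⊆ Finset.range L) :
    ∑ r ∈ Finset.range L, (blockDigits L A (L * i + r) : ℕ) = #(A i) := by
  have hterm : ∀ r ∈ Finset.range L,
      (blockDigits L A (L * i + r) : ℕ) = if r ∈ A i then 1 else 0 := fun r hr ↦ by
    rw [blockDigits_mul_add A i (Finset.mem_range.1 hr)]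
    split_ifs <;> rfl
  rw [Finset.sum_congr rfl hterm, ← Finset.card_filter, Finset.filter_mem_eq_inter,
    Finset.inter_eq_right.2 hA]

lemma frequently_blockDigits_ne_zero {L : ℕ} {A : ℕ → Finset ℕ}
    (hA : ∀ i, A i ⊆ Finset.range L) (hne : ∃ᶠ i in atTop, (A i).Nonempty) :
    ∃ᶠ n in atTop, (blockDigits L A n : ℕ) ≠ 0 := by
  refine frequently_atTop.2 fun M ↦ ?_
  obtain ⟨i, hMi, r, hr⟩ := frequently_atTop.1 hne M
  have hrL : r < L := Finset.mem_range.1 (hA i hr)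
  refine ⟨L * i + r, ?_, by simp [blockDigits_mul_add A i hrL, hr]⟩
  exact hMi.trans ((Nat.le_mul_of_pos_left i (by lia)).trans (Nat.le_add_right _ _))

lemma abs_sum_blockDigits_sub_le {L : ℕ} (hL : 0 < L) {f : ℕ → ℝ} (hf : ∀ i, f i ∈ Icc (0 : ℝ) 1)
    {A : ℕ → Finset ℕ} (hA : ∀ i, A i ⊆ Finset.range L)
    (hcard : ∀ i, #(A i) = floorIncrement (fun j ↦ f j * L) i) (n : ℕ) :
    |∑ m ∈ Finset.range n, ((blockDigits L A m : ℕ) - f (m / L))| ≤ 1 + L := by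
  refine abs_sum_range_le_add hL (fun m ↦ ?_) (fun i ↦ ?_) n
  · have hle : ((blockDigits L A m : ℕ) : ℝ) ≤ 1 := by
      exact_mod_cast Nat.le_of_lt_succ (blockDigits L A m).isLt
    rw [abs_sub_le_iff]
    constructor <;>
      linarith [(hf (m / L)).1, (hf (m / L)).2, (blockDigits L A m : ℕ).cast_nonneg (α := ℝ)]
  · have hblock : ∀ j, ∑ r ∈ Finset.range L,
        (((blockDigits L A (L * j + r) : ℕ) : ℝ) - f ((L * j + r) / L)) =
          floorIncrement (fun j ↦ f j * L) j - f j * L := fun j ↦ by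
      have hconst : ∀ r ∈ Finset.range L, f ((L * j + r) / L) = f j := fun r hr ↦ by
        rw [Nat.mul_add_div hL, Nat.div_eq_of_lt (Finset.mem_range.1 hr), add_zero]
      rw [Finset.sum_sub_distrib, ← Nat.cast_sum, sum_blockDigits (hA j), hcard,
        Finset.sum_congr rfl hconst, Finset.sum_const, Finset.card_range, nsmul_eq_mul, mul_comm]
    rw [sum_range_mul, Finset.sum_congr rfl fun j _ ↦ hblock j]
    exact abs_sum_floorIncrement_sub_le (fun j ↦ mul_nonneg (hf j).1 L.cast_nonneg) i

lemma ofDigits_blockDigits_mem_BanachSet {α β t : ℝ} (hα : 0 ≤ α) (hβ : β ≤ 1) (ht : t ∈ Icc α β)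
    {L : ℕ} (hLt : 0 < ⌊t * L⌋₊) {A : ℕ → Finset ℕ} (hA : ∀ i, A i ⊆ Finset.range L)
    (hcard : ∀ i, #(A i) = floorIncrement (fun j ↦ blockMean α β t j * L) i) :
    Real.ofDigits (blockDigits L A) ∈ BanachSet 2 α β := by
  have hL : 0 < L := Nat.pos_of_ne_zero fun h ↦ by simp [h] at hLt
  have hmean := blockMean_mem_Icc ht
  have hmean01 : ∀ i, blockMean α β t i ∈ Icc (0 : ℝ) 1 := fun i ↦ Icc_subset_Icc hα hβ (hmean i)
  have hne : ∃ᶠ i in atTop, (A i).Nonempty :=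
    (Nat.frequently_atTop_iff_infinite.2 infinite_setOf_isFreeBlock).mono fun i hi ↦ by
      have hle := (floorIncrement_mem_Icc (u := fun j ↦ blockMean α β t j * L)
        (fun j ↦ mul_nonneg (hmean01 j).1 L.cast_nonneg) i).1
      rw [← hcard, blockMean, if_pos hi] at hle
      exact Finset.card_pos.1 (hLt.trans_le hle)
  have hdigit := padicDigit_ofDigits (frequently_blockDigits_ne_zero hA hne)
  have hsum : ∀ n, |msum 2 (Real.ofDigits (blockDigits L A)) 0 n -
      ∑ i ∈ Finset.range n, blockMean α β t (i / L)| ≤ 1 + L := fun n ↦ by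
    simpa [msum, hdigit] using abs_sum_blockDigits_sub_le hL hmean01 hA hcard n
  exact ⟨⟨Real.ofDigits_nonneg _, Real.ofDigits_le_one _⟩,
    lowerM_eq_of_abs_msum_sub_le two_pos (fun n ↦ (hmean _).1) hsum
      (frequently_blockMean_eq_left α β t hL),
    upperM_eq_of_abs_msum_sub_le two_pos (fun n ↦ (hmean _).2) hsum
      (frequently_blockMean_eq_right α β t hL)⟩

lemma inv_pow_le_abs_ofDigits_blockDigits_sub {L : ℕ} {A B : ℕ → Finset ℕ} {i : ℕ}
    (hA : A i ⊆ Finset.range (L - 1)) (hB : B i ⊆ Finset.range (L - 1)) (hAB : A i ≠ B i) :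
    ((2 : ℝ) ^ (L * (i + 1)))⁻¹ ≤
      |Real.ofDigits (blockDigits L A) - Real.ofDigits (blockDigits L B)| := by
  obtain ⟨r, hr⟩ : ∃ r, ¬ (r ∈ A i ↔ r ∈ B i) := by
    by_contra! h
    exact hAB (Finset.ext h)
  have hrL : r < L - 1 := by
    by_contra hge
    have hout : r ∉ Finset.range (L - 1) := fun h ↦ hge (Finset.mem_range.1 h)
    exact hr (iff_of_false (fun h ↦ hout (hA h)) fun h ↦ hout (hB h))
  have hne : blockDigits L A (L * i + r) ≠ blockDigits L B (L * i + r) := by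
    rw [blockDigits_mul_add _ _ (by lia), blockDigits_mul_add _ _ (by lia)]
    grind
  have hlast : ∀ A : ℕ → Finset ℕ, A i ⊆ Finset.range (L - 1) →
      blockDigits L A (L * i + (L - 1)) = 0 := fun A hA ↦ by
    rw [blockDigits_mul_add _ _ (by lia), if_neg fun h ↦ Finset.notMem_range_self (hA h)]
  rw [show L * (i + 1) = L * i + (L - 1) + 1 by lia]
  exact_mod_cast inv_pow_le_abs_ofDigits_sub_ofDigits (n := L * i + r) (by lia) hne
    ((hlast A hA).trans (hlast B hB).symm)

end Blocks

/-! ### The lower bound -/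

section LowerBound

lemma exists_injective_mem_powersetCard {D m c : ℕ} (h : D ≤ m.choose c) :
    ∃ e : Fin D → Finset ℕ, Function.Injective e ∧
      ∀ a, e a ∈ Finset.powersetCard c (Finset.range m) := by
  obtain ⟨e⟩ := Function.Embedding.nonempty_of_card_le (α := Fin D)
    (β := Finset.powersetCard c (Finset.range m)) (by simpa using h)
  exact ⟨fun a ↦ e a, Subtype.val_injective.comp e.injective, fun a ↦ (e a).2⟩

lemma exists_block_encoding {P : ℕ → Prop} (hP : {i | P i}.Infinite) {L D : ℕ} {c : ℕ → ℕ}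
    (hc : ∀ i, c i ≤ L) (hD : ∀ i, P i → D ≤ (L - 1).choose (c i)) :
    ∃ A : (ℕ → Fin D) → ℕ → Finset ℕ,
      (∀ x i, A x i ∈ Finset.powersetCard (c i) (Finset.range L)) ∧
      (∀ x i, P i → A x i ⊆ Finset.range (L - 1)) ∧
      ∀ x y k, x k ≠ y k → A x (Nat.nth P k) ≠ A y (Nat.nth P k) := by
  classical
  choose! e he hemem using fun i hi ↦ exists_injective_mem_powersetCard (hD i hi)
  refine ⟨fun x i ↦ if P i then e i (x (Nat.count P i)) else Finset.range (c i),
    fun x i ↦ ?_, fun x i hi ↦ ?_, fun x y k hxy ↦ ?_⟩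
  · dsimp only
    split_ifs with hi
    · exact Finset.powersetCard_mono (Finset.range_mono (Nat.sub_le L 1)) (hemem i hi _)
    · exact Finset.mem_powersetCard.2 ⟨Finset.range_mono (hc i), Finset.card_range _⟩
  · simp only [if_pos hi]
    exact (Finset.mem_powersetCard.1 (hemem i hi _)).1
  · have hk := Nat.nth_mem_of_infinite hP k
    simp only [if_pos hk, Nat.count_nth_of_infinite hP]
    exact (he _ hk).ne hxy

lemma inv_pow_le_exp_mul_rpow {s ρ C d : ℝ} {D L k i : ℕ} (hs : 0 ≤ s) (hD : 0 < D)
    (hρ : ρ * Real.log D = s * (L * Real.log 2)) (hk : ρ * i ≤ k + C)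
    (hd : ((2 : ℝ) ^ (L * (i + 1)))⁻¹ ≤ d) :
    ((D : ℝ) ^ k)⁻¹ ≤ Real.exp (C * Real.log D + s * (L * Real.log 2)) * d ^ s := by
  have hlog : 0 ≤ Real.log D := Real.log_natCast_nonneg D
  calc ((D : ℝ) ^ k)⁻¹ = Real.exp (-(k * Real.log D)) := by
        rw [Real.exp_neg, Real.exp_nat_mul, Real.exp_log (by exact_mod_cast hD)]
    _ ≤ Real.exp (C * Real.log D + s * (L * Real.log 2) - s * (L * Real.log 2) * (i + 1)) := by
        rw [Real.exp_le_exp, ← hρ]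
        nlinarith
    _ = Real.exp (C * Real.log D + s * (L * Real.log 2)) * (((2 : ℝ) ^ (L * (i + 1)))⁻¹) ^ s := by
        rw [Real.rpow_def_of_pos (by positivity), ← Real.exp_add, Real.log_inv, Real.log_pow]
        push_cast
        ring_nf
    _ ≤ Real.exp (C * Real.log D + s * (L * Real.log 2)) * d ^ s := by gcongr

lemma ofReal_le_dimH_range_ofDigits_blockDigits {s : ℝ} {L D : ℕ} (hs : 0 < s) (hD : 1 < D)
    (hlog : s * (L * Real.log 2) < Real.log D) {A : (ℕ → Fin D) → ℕ → Finset ℕ}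
    (hfree : ∀ x i, IsFreeBlock i → A x i ⊆ Finset.range (L - 1))
    (hne : ∀ x y k, x k ≠ y k → A x (Nat.nth IsFreeBlock k) ≠ A y (Nat.nth IsFreeBlock k)) :
    ENNReal.ofReal s ≤ dimH (range fun x ↦ Real.ofDigits (blockDigits L (A x))) := by
  have hlogD : 0 < Real.log D := Real.log_pos (by exact_mod_cast hD)
  obtain ⟨C, hC⟩ := exists_forall_mul_le_count_isFreeBlock_add ((div_lt_one hlogD).2 hlog)
  refine le_dimH_range_of_pow_firstDiff_le
    (C := Real.exp (C * Real.log D + s * (L * Real.log 2))) hD hs fun x y hxy ↦ ?_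
  set k := PiNat.firstDiff x y
  have hk := Nat.nth_mem_of_infinite infinite_setOf_isFreeBlock k
  refine inv_pow_le_exp_mul_rpow (i := Nat.nth IsFreeBlock k) hs.le (zero_lt_one.trans hD)
    (div_mul_cancel₀ _ hlogD.ne') ?_ ?_
  · simpa only [Nat.count_nth_of_infinite infinite_setOf_isFreeBlock] using
      hC (Nat.nth IsFreeBlock k)
  · exact inv_pow_le_abs_ofDigits_blockDigits_sub (hfree x _ hk) (hfree y _ hk)
      (hne x y k (PiNat.apply_firstDiff_ne hxy))

lemma ofReal_le_dimH_BanachSet {α β t s : ℝ} (hα : 0 ≤ α) (hβ : β ≤ 1) (ht : t ∈ Icc α β)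
    (ht01 : t ∈ Ioo 0 1) (hs0 : 0 < s) (hs : s < binEntropy t) :
    ENNReal.ofReal s ≤ dimH (BanachSet 2 α β) := by
  obtain ⟨L, D, hlog, hchoose⟩ := exists_lt_log_forall_le_choose ht01 hs
  have hD : 1 < D := by
    exact_mod_cast (Real.log_pos_iff D.cast_nonneg).1 (hlog.trans_le' (by positivity))
  have hLt : 0 < ⌊t * L⌋₊ := Nat.pos_of_ne_zero fun h ↦ by
    have hfloor := hchoose _ ⟨le_rfl, Nat.floor_le_ceil _⟩
    rw [h, Nat.choose_zero_right] at hfloor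
    lia
  set u : ℕ → ℝ := fun i ↦ blockMean α β t i * L
  have hmean : ∀ i, blockMean α β t i ∈ Icc (0 : ℝ) 1 := fun i ↦
    Icc_subset_Icc hα hβ (blockMean_mem_Icc ht i)
  have hones := floorIncrement_mem_Icc (u := u) fun i ↦ mul_nonneg (hmean i).1 L.cast_nonneg
  have hones_le : ∀ i, floorIncrement u i ≤ L := fun i ↦
    (hones i).2.trans (Nat.ceil_le.2 (mul_le_of_le_one_left L.cast_nonneg (hmean i).2))
  obtain ⟨A, hA, hfree, hne⟩ := exists_block_encoding infinite_setOf_isFreeBlock hones_le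
    fun i hi ↦ hchoose _ (by simpa [u, blockMean, hi] using hones i)
  refine (ofReal_le_dimH_range_ofDigits_blockDigits hs0 hD hlog hfree hne).trans (dimH_mono ?_)
  rintro _ ⟨x, rfl⟩
  exact ofDigits_blockDigits_mem_BanachSet hα hβ ht hLt
    (fun i ↦ (Finset.mem_powersetCard.1 (hA x i)).1)
    fun i ↦ (Finset.mem_powersetCard.1 (hA x i)).2

lemma binEntropy_le_dimH_BanachSet {α β t : ℝ} (hα : 0 ≤ α) (hβ : β ≤ 1) (ht : t ∈ Icc α β) :
    ENNReal.ofReal (binEntropy t) ≤ dimH (BanachSet 2 α β) := by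
  rcases (hα.trans ht.1).eq_or_lt with rfl | ht0
  · simp [binEntropy]
  rcases (ht.2.trans hβ).eq_or_lt with rfl | ht1
  · simp [binEntropy]
  rcases (binEntropy_nonneg ⟨ht0.le, ht1.le⟩).eq_or_lt with h0 | hpos
  · simp [← h0]
  refine le_of_tendsto ((ENNReal.continuous_ofReal.tendsto _).mono_left
    (nhdsWithin_le_nhds (s := Iio (binEntropy t)))) ?_
  filter_upwards [Ioo_mem_nhdsLT hpos] with s hs
  exact ofReal_le_dimH_BanachSet hα hβ ht ⟨ht0, ht1⟩ hs.1 hs.2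

end LowerBound

/-! ### The dimension formula -/

lemma dimH_BanachSet_two_of_isMaxOn {α β t : ℝ} (hα : 0 ≤ α) (hβ : β ≤ 1) (ht : t ∈ Icc α β)
    (hmax : IsMaxOn binEntropy (Icc α β) t) :
    dimH (BanachSet 2 α β) = ENNReal.ofReal (binEntropy t) := by
  refine le_antisymm ?_ (binEntropy_le_dimH_BanachSet hα hβ ht)
  obtain ⟨s, hs, hle⟩ := exists_dimH_BanachSet_le hα (ht.1.trans ht.2) hβ
  exact hle.trans (ENNReal.ofReal_le_ofReal (hmax hs))

/-- The inner supremum has the junk value `0` for `j ∉ s`. -/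
lemma iSup_mem_eq_of_isMaxOn {ι : Type*} {f : ι → ℝ} {s : Set ι} {i : ι} (hi : i ∈ s)
    (hf : 0 ≤ f i) (hmax : IsMaxOn f s i) : ⨆ j ∈ s, f j = f i := by
  have hle : ∀ j, ⨆ _ : j ∈ s, f j ≤ f i := fun j ↦ Real.iSup_le (fun hj ↦ hmax hj) hf
  refine le_antisymm (Real.iSup_le hle hf) ?_
  exact (ciSup_pos (f := fun _ ↦ f i) hi).ge.trans
    (le_ciSup (f := fun j ↦ ⨆ _ : j ∈ s, f j) ⟨f i, forall_mem_range.2 hle⟩ i)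

/-- For `p = 2` and `0 ≤ α ≤ β ≤ 1`,
`dim_H B(α,β) = sup_{α ≤ t ≤ β} h₂(t)`; in particular `dim_H B(γ) = h₂(γ)` for
`0 ≤ γ ≤ 1`. -/
theorem dimH_BanachSet_two (α β : ℝ) (hα : 0 ≤ α) (hαβ : α ≤ β) (hβ : β ≤ 1) :
    dimH (BanachSet 2 α β) = ENNReal.ofReal (⨆ t ∈ Icc α β, binEntropy t) ∧
    ∀ γ : ℝ, 0 ≤ γ → γ ≤ 1 → dimH (BanachSet 2 γ γ) = ENNReal.ofReal (binEntropy γ) := by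
  constructor
  · obtain ⟨t, ht, hmax⟩ := isCompact_Icc.exists_isMaxOn (nonempty_Icc.2 hαβ)
      continuous_binEntropy.continuousOn
    have hnonneg := binEntropy_nonneg (Icc_subset_Icc hα hβ ht)
    rw [iSup_mem_eq_of_isMaxOn ht hnonneg hmax]
    exact dimH_BanachSet_two_of_isMaxOn hα hβ ht hmax
  · intro γ hγ0 hγ1
    refine dimH_BanachSet_two_of_isMaxOn hγ0 hγ1 (left_mem_Icc.2 le_rfl) ?_
    simp [IsMaxOn, IsMaxFilter]
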